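/- arXiv:1406.5589 — 4 statements merged into one kernel-verified Lean document; each statement's English description precedes it below -/
import Mathlib

section
/- For any melody x = (x_1,…,x_{n+1}) of real numbers (n ≥ 1) with D(x) ≠ 0 and any real number t, the transposed inversion x^i + t = (−x_1+t,…,−x_{n+1}+t) satisfies D(x^i + t) ≠ 0 and s(x^i + t) = s(x). -/
open Finset

/-- The numerator `N(x) = n·∑ xᵢxᵢ₊₁ − (∑_{i=1}^n xᵢ)(∑_{i=2}^{n+1} xᵢ)` of the
least-squares slope of the M-graph of the melody `x = (x_1, …, x_{n+1})`
(indexed here as `x 0, …, x n`). -/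
noncomputable def melN (n : ℕ) (x : ℕ → ℝ) : ℝ :=
  n * ∑ i ∈ Finset.range n, x i * x (i + 1) -
    (∑ i ∈ Finset.range n, x i) * (∑ i ∈ Finset.range n, x (i + 1))

/-- The denominator `D(x) = n·∑_{i=1}^n xᵢ² − (∑_{i=1}^n xᵢ)²` of the
least-squares slope of the M-graph of the melody `x = (x_1, …, x_{n+1})`. -/
noncomputable def melD (n : ℕ) (x : ℕ → ℝ) : ℝ :=
  n * ∑ i ∈ Finset.range n, (x i) ^ 2 - (∑ i ∈ Finset.range n, x i) ^ 2

/-- The slope `s(x) = N(x)/D(x)` of the M-graph of the melody `x`. -/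
noncomputable def melS (n : ℕ) (x : ℕ → ℝ) : ℝ := melN n x / melD n x

section ScaledCov

variable {ι R : Type*} [CommRing R]

/-- The covariance of `f` and `g` under the uniform distribution on `s`, multiplied by `#s ^ 2` so
that it makes sense in any commutative ring. Both `melN` and `melD` are of this form. -/
def scaledCov (s : Finset ι) (f g : ι → R) : R :=
  #s * ∑ i ∈ s, f i * g i - (∑ i ∈ s, f i) * ∑ i ∈ s, g i

theorem scaledCov_comm (s : Finset ι) (f g : ι → R) : scaledCov s f g = scaledCov s g f := by
  simp only [scaledCov, mul_comm]

theorem scaledCov_mul_add_const_left (s : Finset ι) (f g : ι → R) (a b : R) :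
    scaledCov s (fun i => a * f i + b) g = a * scaledCov s f g := by
  simp only [scaledCov, add_mul, mul_assoc, sum_add_distrib, ← mul_sum, sum_const, nsmul_eq_mul]
  ring

theorem scaledCov_mul_add_const (s : Finset ι) (f g : ι → R) (a b c d : R) :
    scaledCov s (fun i => a * f i + b) (fun i => c * g i + d) = a * c * scaledCov s f g := by
  rw [scaledCov_mul_add_const_left, scaledCov_comm, scaledCov_mul_add_const_left,
    scaledCov_comm, mul_assoc]

end ScaledCov

theorem melN_eq_scaledCov (n : ℕ) (x : ℕ → ℝ) :
    melN n x = scaledCov (range n) x (fun i => x (i + 1)) := by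
  rw [melN, scaledCov, card_range]

theorem melD_eq_scaledCov (n : ℕ) (x : ℕ → ℝ) : melD n x = scaledCov (range n) x x := by
  simp only [melD, scaledCov, card_range, sq]

theorem melN_mul_add_const (n : ℕ) (x : ℕ → ℝ) (a b : ℝ) :
    melN n (fun i => a * x i + b) = a * a * melN n x := by
  simp only [melN_eq_scaledCov, scaledCov_mul_add_const]

theorem melD_mul_add_const (n : ℕ) (x : ℕ → ℝ) (a b : ℝ) :
    melD n (fun i => a * x i + b) = a * a * melD n x := by
  simp only [melD_eq_scaledCov, scaledCov_mul_add_const]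

theorem melS_inversion_transpose_general (n : ℕ) (x : ℕ → ℝ) (hD : melD n x ≠ 0)
    {a : ℝ} (ha : a ≠ 0) (b : ℝ) :
    melD n (fun i => a * x i + b) ≠ 0 ∧ melS n (fun i => a * x i + b) = melS n x := by
  have haa : a * a ≠ 0 := mul_self_ne_zero.mpr ha
  constructor
  · rw [melD_mul_add_const]
    exact mul_ne_zero haa hD
  · rw [melS, melS, melN_mul_add_const, melD_mul_add_const, mul_div_mul_left _ _ haa]

/-- The slope of the M-graph is invariant under inversion followed by transposition. -/
theorem melS_inversion_transpose (n : ℕ) (hn : 1 ≤ n) (x : ℕ → ℝ) (hD : melD n x ≠ 0)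
    (t : ℝ) :
    melD n (fun i => -x i + t) ≠ 0 ∧ melS n (fun i => -x i + t) = melS n x := by
  simpa only [neg_one_mul] using
    melS_inversion_transpose_general n x hD (neg_ne_zero.mpr one_ne_zero) t
end

section
/- For any melody x = (x_1,…,x_{n+1}) of real numbers (n ≥ 1), the retrograde x^r = (x_{n+1},…,x_1) satisfies the identity D(x^r) − D(x) = (x_{n+1} − x_1)·((n+1)(x_{n+1} + x_1) − 2·∑_{i=1}^{n+1} x_i). -/
open Finset

theorem sum_range_apply_sub {G : Type*} [AddCommGroup G] (f : ℕ → G) (n : ℕ) :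
    ∑ i ∈ range n, f (n - i) = ∑ i ∈ range n, f i + (f n - f 0) := by
  have append_first : ∑ i ∈ range n, f (n - i) + f 0 = ∑ i ∈ range n, f i + f n :=
    calc ∑ i ∈ range n, f (n - i) + f 0
      _ = ∑ i ∈ range (n + 1), f (n - i) := by rw [sum_range_succ, Nat.sub_self]
      _ = ∑ i ∈ range (n + 1), f i := sum_flip f
      _ = ∑ i ∈ range n, f i + f n := sum_range_succ f n
  rw [eq_sub_of_add_eq append_first, add_sub_assoc]

/-- The identity for the change of the denominator `D` under retrograde. -/
theorem melD_retrograde_sub (n : ℕ) (hn : 1 ≤ n) (x : ℕ → ℝ) :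
    melD n (fun i => x (n - i)) - melD n x =
      (x n - x 0) * ((n + 1 : ℝ) * (x n + x 0) - 2 * ∑ i ∈ Finset.range (n + 1), x i) := by
  have sum_retrograde := sum_range_apply_sub x n
  have sum_sq_retrograde := sum_range_apply_sub (fun i => x i ^ 2) n
  calc melD n (fun i => x (n - i)) - melD n x
    _ = n * (x n ^ 2 - x 0 ^ 2) -
          ((∑ i ∈ range n, x i + (x n - x 0)) ^ 2 - (∑ i ∈ range n, x i) ^ 2) := by
      rw [melD, melD, sum_retrograde, sum_sq_retrograde]
      ring
    _ = (x n - x 0) * (n * (x n + x 0) - (2 * ∑ i ∈ range n, x i + (x n - x 0))) := by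
      ring
    _ = (x n - x 0) * ((n + 1 : ℝ) * (x n + x 0) - 2 * ∑ i ∈ range (n + 1), x i) := by
      rw [sum_range_succ]
      ring
end

section
/- For any melody x = (x_1,…,x_{n+1}) of real numbers (n ≥ 1), the retrograde x^r = (x_{n+1},…,x_1) satisfies D(x^r) = D(x) if and only if x_1 = x_{n+1} or (n+1)(x_{n+1} + x_1) = 2·∑_{i=1}^{n+1} x_i. -/
/-!
`D(x)` omits the last note and `D(xʳ)` the first, so both are obtained from the sum of all notes
and the sum of all their squares by removing one endpoint. In `D(xʳ) - D(x)` the full sum of squares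
cancels, leaving two differences of squares with the common factor `x_n - x_0`.
-/

open Finset

theorem sum_range_reflect_succ {M : Type*} [AddCommMonoid M] (f : ℕ → M) (n : ℕ) :
    ∑ i ∈ range n, f (n - i) = ∑ i ∈ range n, f (i + 1) := by
  rw [← sum_range_reflect]
  refine sum_congr rfl fun i hi => congrArg f ?_
  have := mem_range.mp hi
  omega

theorem melD_retrograde_eq_melD_shift (n : ℕ) (x : ℕ → ℝ) :
    melD n (fun i => x (n - i)) = melD n (fun i => x (i + 1)) := by
  simp only [melD, sum_range_reflect_succ x, sum_range_reflect_succ (fun i => x i ^ 2)]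

theorem melD_eq_sub_last (n : ℕ) (x : ℕ → ℝ) :
    melD n x = n * (∑ i ∈ range (n + 1), x i ^ 2 - x n ^ 2) -
      (∑ i ∈ range (n + 1), x i - x n) ^ 2 := by
  simp only [melD, sum_range_succ, add_sub_cancel_right]

theorem melD_shift_eq_sub_first (n : ℕ) (x : ℕ → ℝ) :
    melD n (fun i => x (i + 1)) = n * (∑ i ∈ range (n + 1), x i ^ 2 - x 0 ^ 2) -
      (∑ i ∈ range (n + 1), x i - x 0) ^ 2 := by
  simp only [melD, sum_range_succ', add_sub_cancel_right]

theorem melD_retrograde_sub_melD (n : ℕ) (x : ℕ → ℝ) :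
    melD n (fun i => x (n - i)) - melD n x =
      (x n - x 0) * ((n + 1) * (x n + x 0) - 2 * ∑ i ∈ range (n + 1), x i) := by
  rw [melD_retrograde_eq_melD_shift, melD_shift_eq_sub_first, melD_eq_sub_last]
  ring

/-- The denominator `D` is invariant under retrograde iff the melody begins and ends
with the same note, or `(n+1)(x_{n+1} + x_1) = 2 ∑ x_i`. -/
theorem melD_retrograde_iff (n : ℕ) (hn : 1 ≤ n) (x : ℕ → ℝ) :
    melD n (fun i => x (n - i)) = melD n x ↔
      x 0 = x n ∨ (n + 1 : ℝ) * (x n + x 0) = 2 * ∑ i ∈ Finset.range (n + 1), x i := by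
  rw [← sub_eq_zero, melD_retrograde_sub_melD, mul_eq_zero, sub_eq_zero, sub_eq_zero,
    eq_comm (a := x n)]
end

section
/- Let x = (x_1,x_2,x_3,x_4) be a melody of real numbers and set y_i = x_{i+1} − x_i for i = 1,2,3. Assume y_1 ≠ 0, y_2 ≠ 0, and D(x) ≠ 0, and let s_1 = y_2/y_1 and s_2 = y_3/y_2 be the local slopes. Then s(x) = (s_1² + 2s_1 + s_1 s_2 + 2 s_1² s_2) / (2(1 + s_1 + s_1²)); in particular the slope of a length-4 melody is a rational function of the slopes of its consecutive three-note submelodies. -/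
/-!
The numerator and the denominator are both of the form `n ∑ fᵢ gᵢ − (∑ fᵢ)(∑ gᵢ)`, which is the sum
over pairs `i < j` of `(fⱼ − fᵢ)(gⱼ − gᵢ)`; so both are quadratic forms in the steps
`yᵢ = x_{i+1} − x_i`. Substituting `y₂ = s₁ y₁` and `y₃ = s₂ y₂` exhibits a factor `y₁²` in each,
which cancels in the quotient.
-/

open Finset

theorem mul_sum_mul_sub_sum_mul_sum_eq_sum_pairs {R : Type*} [CommRing R] (n : ℕ) (f g : ℕ → R) :
    n * ∑ i ∈ range n, f i * g i - (∑ i ∈ range n, f i) * ∑ i ∈ range n, g i =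
      ∑ j ∈ range n, ∑ i ∈ range j, (f j - f i) * (g j - g i) := by
  induction n with
  | zero => simp
  | succ n ih =>
    have inner_sum : ∑ i ∈ range n, (f n - f i) * (g n - g i) =
        n * (f n * g n) - f n * ∑ i ∈ range n, g i - (∑ i ∈ range n, f i) * g n +
          ∑ i ∈ range n, f i * g i := by
      simp only [sub_mul, mul_sub, sum_sub_distrib, sum_const, card_range, nsmul_eq_mul,
        mul_sum, sum_mul]
      ring
    rw [sum_range_succ (fun j ↦ ∑ i ∈ range j, _), ← ih, inner_sum]
    simp only [sum_range_succ, Nat.cast_succ]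
    ring

theorem melN_eq_sum_pairs (n : ℕ) (x : ℕ → ℝ) :
    melN n x = ∑ j ∈ range n, ∑ i ∈ range j, (x j - x i) * (x (j + 1) - x (i + 1)) :=
  mul_sum_mul_sub_sum_mul_sum_eq_sum_pairs n x fun i ↦ x (i + 1)

theorem melD_eq_sum_pairs (n : ℕ) (x : ℕ → ℝ) :
    melD n x = ∑ j ∈ range n, ∑ i ∈ range j, (x j - x i) ^ 2 := by
  simpa only [melD, sq] using mul_sum_mul_sub_sum_mul_sum_eq_sum_pairs n x x

theorem melN_three (x : ℕ → ℝ) :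
    melN 3 x = (x 2 - x 1) ^ 2 + 2 * (x 1 - x 0) * (x 2 - x 1) +
      (x 1 - x 0) * (x 3 - x 2) + 2 * (x 2 - x 1) * (x 3 - x 2) := by
  simp only [melN_eq_sum_pairs, sum_range_succ, sum_range_zero]
  ring

theorem melD_three (x : ℕ → ℝ) :
    melD 3 x = 2 * ((x 1 - x 0) ^ 2 + (x 1 - x 0) * (x 2 - x 1) + (x 2 - x 1) ^ 2) := by
  simp only [melD_eq_sum_pairs, sum_range_succ, sum_range_zero]
  ring

/-- The slope of a four-note melody is a rational function of the local slopes
`s₁ = y₂/y₁`, `s₂ = y₃/y₂` of its consecutive three-note submelodies, where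
`yᵢ = x_{i+1} − x_i`. -/
theorem melS_of_local_slopes (x : ℕ → ℝ)
    (hy1 : x 1 - x 0 ≠ 0) (hy2 : x 2 - x 1 ≠ 0) (hD : melD 3 x ≠ 0) :
    melS 3 x =
      ((((x 2 - x 1) / (x 1 - x 0)) ^ 2 + 2 * ((x 2 - x 1) / (x 1 - x 0)) +
          ((x 2 - x 1) / (x 1 - x 0)) * ((x 3 - x 2) / (x 2 - x 1)) +
          2 * ((x 2 - x 1) / (x 1 - x 0)) ^ 2 * ((x 3 - x 2) / (x 2 - x 1))) /
        (2 * (1 + ((x 2 - x 1) / (x 1 - x 0)) + ((x 2 - x 1) / (x 1 - x 0)) ^ 2))) := by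
  set s₁ := (x 2 - x 1) / (x 1 - x 0)
  set s₂ := (x 3 - x 2) / (x 2 - x 1)
  have step₂ : x 2 - x 1 = s₁ * (x 1 - x 0) := (div_mul_cancel₀ _ hy1).symm
  have step₃ : x 3 - x 2 = s₂ * (s₁ * (x 1 - x 0)) := by
    rw [← step₂, div_mul_cancel₀ _ hy2]
  have melN_eq : melN 3 x =
      (x 1 - x 0) ^ 2 * (s₁ ^ 2 + 2 * s₁ + s₁ * s₂ + 2 * s₁ ^ 2 * s₂) := by
    rw [melN_three, step₃, step₂]
    ring
  have melD_eq : melD 3 x = (x 1 - x 0) ^ 2 * (2 * (1 + s₁ + s₁ ^ 2)) := by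
    rw [melD_three, step₂]
    ring
  rw [melS, melN_eq, melD_eq, mul_div_mul_left _ _ (pow_ne_zero 2 hy1)]
end
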